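/- There exists a constant C > 0 such that for every continuously differentiable compactly supported vector field w : ℝ³ → ℝ³ one has ∫_{{x ∈ ℝ³ : x₃ < 0}} |∇w|² dx ≤ C ∫_{{x ∈ ℝ³ : x₃ < 0}} |Sw|² dx, where ∇w is the Jacobian matrix (∂_j w_i)_{ij}, Sw = ½(∇w + (∇w)ᵀ), and |·| is the Frobenius norm. -/

import Mathlib

open MeasureTheory

/-- The `j`-th partial derivative of a function on `ℝ³` (the coordinate of index `2` is `z`). -/
noncomputable def pd (j : Fin 3) (f : (Fin 3 → ℝ) → ℝ) (x : Fin 3 → ℝ) : ℝ :=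
  fderiv ℝ f x (Pi.single j 1)

/-- The lower half-space `{x ∈ ℝ³ : x₃ < 0}`. -/
def lowerHalf : Set (Fin 3 → ℝ) := {x | x 2 < 0}

open Filter Topology NNReal

abbrev E3 := Fin 3 → ℝ

lemma ld_supp {f : E3 → ℝ} (v : E3) {x : E3} (hx : x ∉ tsupport f) : lineDeriv ℝ f x v = 0 := by
  have h : f =ᶠ[𝓝 x] (fun _ => 0) := notMem_tsupport_iff_eventuallyEq.mp hx
  rw [h.lineDeriv_eq]
  simp [lineDeriv]

lemma ld_integrable {f : E3 → ℝ} {C : ℝ≥0} (hf : LipschitzWith C f) (h'f : HasCompactSupport f)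
    (v : E3) : Integrable (fun x => lineDeriv ℝ f x v) := by
  have hm : Measurable (fun x => lineDeriv ℝ f x v) := measurable_lineDeriv hf.continuous
  have h1 : Integrable ((tsupport f).indicator (fun _ : E3 => (C * ‖v‖ : ℝ))) := by
    rw [integrable_indicator_iff (isClosed_tsupport f).measurableSet]
    exact continuousOn_const.integrableOn_compact h'f
  refine h1.mono' hm.aestronglyMeasurable (Eventually.of_forall fun x => ?_)
  by_cases hx : x ∈ tsupport f
  · rw [Set.indicator_of_mem hx]
    exact norm_lineDeriv_le_of_lipschitz ℝ hf
  · rw [ld_supp v hx, Set.indicator_of_notMem hx, norm_zero]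

lemma ld_mul_integrable {f g : E3 → ℝ} {C D : ℝ≥0} (hf : LipschitzWith C f)
    (hg : LipschitzWith D g) (h'g : HasCompactSupport g)
    (v w : E3) : Integrable (fun x => lineDeriv ℝ f x v * lineDeriv ℝ g x w) := by
  refine (ld_integrable hg h'g w).bdd_mul (c := C * ‖v‖)
    (measurable_lineDeriv hf.continuous).aestronglyMeasurable
    (Eventually.of_forall fun x => norm_lineDeriv_le_of_lipschitz ℝ hf)

lemma ld_sym {f g : E3 → ℝ} {C D : ℝ≥0} (hf : LipschitzWith C f) (h'f : HasCompactSupport f)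
    (hg : LipschitzWith D g) (h'g : HasCompactSupport g) (v w : E3) :
    ∫ x, lineDeriv ℝ f x v * lineDeriv ℝ g x w = ∫ x, lineDeriv ℝ f x w * lineDeriv ℝ g x v := by
  have A := hg.integral_inv_smul_sub_mul_tendsto_integral_lineDeriv_mul (μ := volume)
    (ld_integrable hf h'f v) w
  have B := hf.integral_inv_smul_sub_mul_tendsto_integral_lineDeriv_mul (μ := volume)
    (ld_integrable hg h'g (-v)) (-w)
  have key : ∀ t : ℝ, ∫ x, (t⁻¹ • (g (x + t • w) - g x)) * lineDeriv ℝ f x v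
      = ∫ x, (t⁻¹ • (f (x + t • (-w)) - f x)) * lineDeriv ℝ g x (-v) := by
    intro t
    have hgt : LipschitzWith D (fun x => g (x + t • w)) := by
      have := hg.comp (LipschitzWith.id.add (LipschitzWith.const (t • w)))
      simpa [Function.comp_def] using this
    have h'gt : HasCompactSupport (fun x => g (x + t • w)) :=
      h'g.comp_homeomorph (Homeomorph.addRight (t • w))
    have e1 : ∫ x, lineDeriv ℝ f x v * g (x + t • w)
        = ∫ x, lineDeriv ℝ g x (-v) * f (x + t • (-w)) := by
      rw [hf.integral_lineDeriv_mul_eq hgt h'gt v,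
        ← integral_add_right_eq_self _ (t • (-w))]
      congr 1; ext x
      congr 1
      simp only [lineDeriv]
      congr 1; ext s
      congr 1
      simp only [smul_neg]
      abel
    have e2 := hf.integral_lineDeriv_mul_eq (μ := volume) hg h'g v
    have i1 : ∀ a : E3, Integrable (fun x => lineDeriv ℝ f x v * g (x + a)) := fun a =>
      (Integrable.bdd_mul (c := C * ‖v‖) (Continuous.integrable_of_hasCompactSupport
        (hg.continuous.comp (continuous_add_const a))
          (h'g.comp_homeomorph (Homeomorph.addRight a)))
        (measurable_lineDeriv hf.continuous).aestronglyMeasurable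
        (Eventually.of_forall fun x => norm_lineDeriv_le_of_lipschitz ℝ hf))
    have i2 : ∀ a : E3, Integrable (fun x => lineDeriv ℝ g x (-v) * f (x + a)) := fun a =>
      (Integrable.bdd_mul (c := D * ‖-v‖) (Continuous.integrable_of_hasCompactSupport
        (hf.continuous.comp (continuous_add_const a))
          (h'f.comp_homeomorph (Homeomorph.addRight a)))
        (measurable_lineDeriv hg.continuous).aestronglyMeasurable
        (Eventually.of_forall fun x => norm_lineDeriv_le_of_lipschitz ℝ hg))
    have j1 := i1 0
    have j2 := i2 0
    simp only [add_zero] at j1 j2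
    simp only [smul_eq_mul, mul_assoc, integral_const_mul]
    congr 1
    calc _ = ∫ x, (lineDeriv ℝ f x v * g (x + t • w) - lineDeriv ℝ f x v * g x) := by
            congr 1; ext x; ring
      _ = ∫ x, (lineDeriv ℝ g x (-v) * f (x + t • (-w)) - lineDeriv ℝ g x (-v) * f x) := by
            rw [integral_sub (i1 _) j1, integral_sub (i2 _) j2, e1, e2]
      _ = _ := by congr 1; ext x; ring
  simp only [key] at A
  have := tendsto_nhds_unique A B
  simp only [lineDeriv_neg, neg_mul_neg] at this
  rw [← this]
  congr 1; ext x; ring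

/-- whole space Korn -/
lemma korn_whole {u : Fin 3 → E3 → ℝ} {C : ℝ≥0} (hu : ∀ i, LipschitzWith C (u i))
    (h'u : ∀ i, HasCompactSupport (u i)) (e : Fin 3 → E3) :
    ∫ x, ∑ i, ∑ j, (lineDeriv ℝ (u i) x (e j)) ^ 2 ≤
      2 * ∫ x, ∑ i, ∑ j, ((lineDeriv ℝ (u i) x (e j) + lineDeriv ℝ (u j) x (e i)) / 2) ^ 2 := by
  have I : ∀ i j k l, Integrable (fun x => lineDeriv ℝ (u i) x (e k) * lineDeriv ℝ (u j) x (e l)) :=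
    fun i j k l => ld_mul_integrable (hu i) (hu j) (h'u j) _ _
  have I1 : Integrable (fun x => ∑ i, ∑ j, (lineDeriv ℝ (u i) x (e j)) ^ 2) :=
    integrable_finsetSum _ fun i _ => integrable_finsetSum _ fun j _ => by
      simpa only [sq] using I i i j j
  have I2 : Integrable (fun x => ∑ i, ∑ j, (lineDeriv ℝ (u i) x (e j) * lineDeriv ℝ (u j) x (e i))) :=
    integrable_finsetSum _ fun i _ => integrable_finsetSum _ fun j _ => I i j j i
  have h1 : ∫ x, ∑ i, ∑ j, ((lineDeriv ℝ (u i) x (e j) + lineDeriv ℝ (u j) x (e i)) / 2) ^ 2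
      = ∫ x, ((1/2) * (∑ i, ∑ j, (lineDeriv ℝ (u i) x (e j)) ^ 2)
        + (1/2) * (∑ i, ∑ j, (lineDeriv ℝ (u i) x (e j) * lineDeriv ℝ (u j) x (e i)))) := by
    congr 1; ext x
    simp only [Fin.sum_univ_three]
    ring
  have h2 : 0 ≤ ∫ x, ∑ i, ∑ j, (lineDeriv ℝ (u i) x (e j) * lineDeriv ℝ (u j) x (e i)) := by
    have : ∫ x, ∑ i, ∑ j, (lineDeriv ℝ (u i) x (e j) * lineDeriv ℝ (u j) x (e i))
        = ∫ x, (∑ i, lineDeriv ℝ (u i) x (e i)) ^ 2 := by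
      have : ∀ x, (∑ i, lineDeriv ℝ (u i) x (e i)) ^ 2
          = ∑ i, ∑ j, (lineDeriv ℝ (u i) x (e i) * lineDeriv ℝ (u j) x (e j)) := by
        intro x; rw [sq, Finset.sum_mul_sum]
      simp only [this]
      rw [integral_finsetSum _ fun i _ => integrable_finsetSum _ fun j _ => I i j j i,
        integral_finsetSum _ fun i _ => integrable_finsetSum _ fun j _ => I i j i j]
      congr 1; ext i
      rw [integral_finsetSum _ fun j _ => I i j j i, integral_finsetSum _ fun j _ => I i j i j]
      congr 1; ext j
      exact ld_sym (hu i) (h'u i) (hu j) (h'u j) _ _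
    rw [this]
    exact integral_nonneg fun x => sq_nonneg _
  rw [h1, integral_add (I1.const_mul _) (I2.const_mul _), integral_const_mul, integral_const_mul]
  linarith

noncomputable def dg (l : ℝ) (k : Fin 3) : ℝ := if k = 2 then -l else 1

noncomputable def TT (l : ℝ) (x : E3) : E3 := fun k => dg l k * x k

noncomputable def mm (l : ℝ) (x : E3) : E3 := fun k =>
  if k = 2 then -((l - 1) / 2 * x 2) - (l + 1) / 2 * |x 2| else x k

def upperHalf : Set E3 := {x | 0 < x 2}

lemma mm_upper (l : ℝ) {x : E3} (hx : 0 < x 2) : mm l x = TT l x := by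
  ext k
  by_cases hk : k = 2
  · subst hk; simp only [mm, TT, dg, if_true, abs_of_pos hx]; ring
  · simp [mm, TT, dg, hk]

lemma mm_lower (l : ℝ) {x : E3} (hx : x 2 < 0) : mm l x = x := by
  ext k
  by_cases hk : k = 2
  · subst hk; simp only [mm, if_true, abs_of_neg hx]; ring
  · simp [mm, hk]

lemma mm_lip : ∀ l : ℝ, 1 ≤ l → LipschitzWith (Real.toNNReal l) (mm l) := by
  intro l hl
  refine LipschitzWith.of_dist_le_mul fun x y => ?_
  rw [Real.coe_toNNReal _ (by linarith)]
  have hk' : ∀ k, |x k - y k| ≤ dist x y := fun k => by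
    have := dist_le_pi_dist x y k
    rwa [Real.dist_eq] at this
  refine (dist_pi_le_iff (by positivity)).2 fun k => ?_
  rw [Real.dist_eq]
  have h0 : 0 ≤ dist x y := dist_nonneg
  by_cases hk : k = 2
  · subst hk
    simp only [mm, if_true]
    have h1 := hk' 2
    have h2 := abs_abs_sub_abs_le_abs_sub (x 2) (y 2)
    have h3 : -((l - 1) / 2 * x 2) - (l + 1) / 2 * |x 2| -
        (-((l - 1) / 2 * y 2) - (l + 1) / 2 * |y 2|)
        = -((l - 1) / 2 * (x 2 - y 2)) - (l + 1) / 2 * (|x 2| - |y 2|) := by ring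
    rw [h3]
    calc _ ≤ |-((l - 1) / 2 * (x 2 - y 2))| + |(l + 1) / 2 * (|x 2| - |y 2|)| := abs_sub _ _
      _ = (l - 1) / 2 * |x 2 - y 2| + (l + 1) / 2 * |(|x 2| - |y 2|)| := by
        rw [abs_neg, abs_mul, abs_mul, abs_of_nonneg (by linarith : 0 ≤ (l - 1) / 2),
          abs_of_nonneg (by linarith : 0 ≤ (l + 1) / 2)]
      _ ≤ (l - 1) / 2 * dist x y + (l + 1) / 2 * dist x y := by
        gcongr
        exact h2.trans h1
      _ = _ := by ring
  · simp only [mm, hk, if_false]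
    exact (hk' k).trans (by nlinarith)

lemma mm_norm (l : ℝ) (hl : 1 ≤ l) (x : E3) : ‖x‖ ≤ ‖mm l x‖ := by
  refine (pi_norm_le_iff_of_nonneg (norm_nonneg _)).2 fun k => ?_
  refine le_trans ?_ (norm_le_pi_norm (mm l x) k)
  by_cases hk : k = 2
  · subst hk
    simp only [mm, if_true, Real.norm_eq_abs]
    rcases le_total 0 (x 2) with h | h
    · rw [abs_of_nonneg h, abs_of_nonpos (by nlinarith)]; nlinarith
    · rw [abs_of_nonpos h, abs_of_nonpos (by nlinarith)]; nlinarith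
  · simp [mm, hk]

lemma mm_supp {f : E3 → ℝ} (hf : HasCompactSupport f) (l : ℝ) (hl : 1 ≤ l) :
    HasCompactSupport (fun x => f (mm l x)) := by
  obtain ⟨R, hR⟩ := hf.isCompact.isBounded.subset_closedBall (0 : E3)
  refine HasCompactSupport.intro (isCompact_closedBall (0 : E3) R) fun x hx => ?_
  by_contra hne
  have h1 := hR (subset_tsupport f (Function.mem_support.2 hne))
  simp only [Metric.mem_closedBall, dist_zero_right] at h1 hx
  exact hx ((mm_norm l hl x).trans h1)

lemma TT_eq (l : ℝ) : TT l = Matrix.toLin' (Matrix.diagonal (dg l)) := by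
  ext x k
  simp [TT, Matrix.mulVec_diagonal]

lemma det_dg (l : ℝ) : (Matrix.diagonal (dg l)).det = -l := by
  simp [Matrix.det_diagonal, dg]

lemma TT_mem (l : ℝ) (hl : 0 < l) (x : E3) : TT l x ∈ lowerHalf ↔ x ∈ upperHalf := by
  simp only [lowerHalf, upperHalf, TT, dg, Set.mem_ofPred_eq, if_true]
  constructor
  · intro h; by_contra h'; push Not at h'; nlinarith
  · intro h; nlinarith

lemma TT_meas (l : ℝ) : Measurable (TT l) := by
  unfold TT; fun_prop

lemma TT_map (l : ℝ) (hl : 0 < l) :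
    Measure.map (TT l) volume = ENNReal.ofReal l⁻¹ • (volume : Measure E3) := by
  have h := Real.smul_map_diagonal_volume_pi (D := dg l) (by rw [det_dg]; linarith)
  rw [det_dg, abs_neg, abs_of_pos hl, ← TT_eq] at h
  conv_rhs => rw [← h]
  rw [smul_smul, ← ENNReal.ofReal_mul (by positivity), inv_mul_cancel₀ hl.ne']
  simp

lemma lower_meas : MeasurableSet lowerHalf := by
  unfold lowerHalf
  exact measurableSet_lt (measurable_pi_apply 2) measurable_const

lemma upper_meas : MeasurableSet upperHalf := by
  unfold upperHalf
  exact measurableSet_lt measurable_const (measurable_pi_apply 2)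

lemma cov (l : ℝ) (hl : 0 < l) {F : E3 → ℝ} (hF : IntegrableOn F lowerHalf) :
    IntegrableOn (fun x => F (TT l x)) upperHalf ∧
    ∫ x in upperHalf, F (TT l x) = l⁻¹ * ∫ x in lowerHalf, F x := by
  rw [← integrable_indicator_iff lower_meas] at hF
  have e : upperHalf.indicator (fun x => F (TT l x)) = fun x => lowerHalf.indicator F (TT l x) := by
    ext x
    by_cases hx : x ∈ upperHalf
    · rw [Set.indicator_of_mem hx, Set.indicator_of_mem ((TT_mem l hl x).2 hx)]
    · rw [Set.indicator_of_notMem hx, Set.indicator_of_notMem (fun h => hx ((TT_mem l hl x).1 h))]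
  have hF' : Integrable (lowerHalf.indicator F) (Measure.map (TT l) volume) := by
    rw [TT_map l hl]
    exact hF.smul_measure ENNReal.ofReal_ne_top
  constructor
  · rw [← integrable_indicator_iff upper_meas, e]
    exact hF'.comp_measurable (TT_meas l)
  · rw [← integral_indicator upper_meas, ← integral_indicator lower_meas, e,
      ← integral_map (TT_meas l).aemeasurable hF'.aestronglyMeasurable, TT_map l hl,
      integral_smul_measure, ENNReal.toReal_ofReal (by positivity), smul_eq_mul]

lemma upper_ae : (lowerHalfᶜ : Set E3) =ᵐ[volume] upperHalf := by
  have h : (volume : Measure E3) {x | x 2 = 0} = 0 := by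
    rw [volume_pi]; exact Measure.pi_hyperplane _ _ _
  have h2 : ∀ᵐ x : E3, x 2 ≠ 0 := by
    rw [ae_iff]; simpa using h
  filter_upwards [h2] with x hx
  apply propext
  change ¬ (x 2 < 0) ↔ 0 < x 2
  rw [not_lt]
  exact ⟨fun h => lt_of_le_of_ne h (Ne.symm hx), le_of_lt⟩

lemma hasLD_pd {f : E3 → ℝ} (hf : ContDiff ℝ 1 f) (j : Fin 3) (x : E3) :
    HasLineDerivAt ℝ f (pd j f x) x (Pi.single j 1) :=
  ((hf.differentiable one_ne_zero) x).hasFDerivAt.hasLineDerivAt _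

lemma hasLD_TT {f : E3 → ℝ} (hf : ContDiff ℝ 1 f) (l : ℝ) (j : Fin 3) (x : E3) :
    HasLineDerivAt ℝ (fun y => f (TT l y)) (dg l j * pd j f (TT l x)) x (Pi.single j 1) := by
  have h := (hasLD_pd hf j (TT l x)).smul (dg l j)
  unfold HasLineDerivAt at h ⊢
  have e : (fun t : ℝ => f (TT l (x + t • Pi.single j 1)))
      = fun t : ℝ => f (TT l x + t • dg l j • Pi.single j 1) := by
    funext t
    congr 1
    ext k
    simp only [TT, Pi.add_apply, Pi.smul_apply, smul_eq_mul]
    by_cases hk : k = j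
    · subst hk; simp; ring
    · simp [hk]
  rw [e]
  exact h

noncomputable def ca (i : Fin 3) : ℝ := if i = 2 then -2 else 2
noncomputable def cb (i : Fin 3) : ℝ := if i = 2 then 3 else -1

noncomputable def ext' (w : E3 → E3) (i : Fin 3) (x : E3) : ℝ :=
  ca i * w (mm 1 x) i + cb i * w (mm 3 x) i

lemma ext_lower {w : E3 → E3} (hw : ContDiff ℝ 1 w) (i j : Fin 3) {x : E3} (hx : x ∈ lowerHalf) :
    lineDeriv ℝ (ext' w i) x (Pi.single j 1) = pd j (fun y => w y i) x := by
  have hwi : ContDiff ℝ 1 (fun y => w y i) := contDiff_pi.1 hw i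
  have ho : IsOpen lowerHalf := isOpen_lt (continuous_apply 2) continuous_const
  have h : ext' w i =ᶠ[𝓝 x] fun y => w y i := by
    filter_upwards [ho.mem_nhds hx] with y hy
    have hab : ca i + cb i = 1 := by unfold ca cb; split_ifs <;> norm_num
    rw [ext', mm_lower _ hy, mm_lower _ hy, ← add_mul, hab, one_mul]
  rw [h.lineDeriv_eq]
  exact (hasLD_pd hwi j x).lineDeriv

lemma ext_upper {w : E3 → E3} (hw : ContDiff ℝ 1 w) (i j : Fin 3) {x : E3} (hx : x ∈ upperHalf) :
    lineDeriv ℝ (ext' w i) x (Pi.single j 1) =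
      ca i * (dg 1 j * pd j (fun y => w y i) (TT 1 x))
      + cb i * (dg 3 j * pd j (fun y => w y i) (TT 3 x)) := by
  have hwi : ContDiff ℝ 1 (fun y => w y i) := contDiff_pi.1 hw i
  have ho : IsOpen upperHalf := isOpen_lt continuous_const (continuous_apply 2)
  have h : ext' w i =ᶠ[𝓝 x] fun y => ca i * w (TT 1 y) i + cb i * w (TT 3 y) i := by
    filter_upwards [ho.mem_nhds hx] with y hy
    rw [ext', mm_upper _ hy, mm_upper _ hy]
  rw [h.lineDeriv_eq]
  have h1 := hasLD_TT hwi 1 j x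
  have h3 := hasLD_TT hwi 3 j x
  refine HasLineDerivAt.lineDeriv ?_
  unfold HasLineDerivAt at h1 h3 ⊢
  exact (h1.const_mul _).add (h3.const_mul _)

theorem korn_half_space :
    ∃ C : ℝ, 0 < C ∧
      ∀ w : (Fin 3 → ℝ) → Fin 3 → ℝ, ContDiff ℝ 1 w → HasCompactSupport w →
        (∫ x in lowerHalf, ∑ i : Fin 3, ∑ j : Fin 3, (pd j (fun y => w y i) x) ^ 2)
          ≤ C * ∫ x in lowerHalf, ∑ i : Fin 3, ∑ j : Fin 3,
              ((pd j (fun y => w y i) x + pd i (fun y => w y j) x) / 2) ^ 2 := by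
  refine ⟨1000, by norm_num, fun w hw hws => ?_⟩
  have hwi : ∀ i, ContDiff ℝ 1 (fun y => w y i) := fun i => contDiff_pi.1 hw i
  have hwsi : ∀ i, HasCompactSupport (fun y => w y i) := fun i =>
    hws.comp_left (g := fun v : E3 => v i) rfl
  obtain ⟨K, hK⟩ := hw.lipschitzWith_of_hasCompactSupport hws one_ne_zero
  have hlip0 : ∀ i, LipschitzWith K (fun y => w y i) := fun i => by
    simpa [Function.comp_def] using (LipschitzWith.eval i).comp hK
  have hlip1 : ∀ i, ∃ C, LipschitzWith C (ext' w i) := fun i => by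
    have h1 := (hlip0 i).comp (mm_lip 1 le_rfl)
    have h3 := (hlip0 i).comp (mm_lip 3 (by norm_num))
    exact ⟨_, ((lipschitzWith_smul (ca i)).comp h1).add ((lipschitzWith_smul (cb i)).comp h3)⟩
  choose Cf hCf using hlip1
  have hlip : ∀ i, LipschitzWith (∑ i, Cf i) (ext' w i) := fun i =>
    (hCf i).weaken (Finset.single_le_sum (f := Cf) (fun _ _ => zero_le) (Finset.mem_univ i))
  have hsup : ∀ i, HasCompactSupport (ext' w i) := fun i =>
    ((mm_supp (hwsi i) 1 le_rfl).mul_left (f := fun _ => ca i)).add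
      ((mm_supp (hwsi i) 3 (by norm_num)).mul_left (f := fun _ => cb i))
  have korn := korn_whole hlip hsup (fun j => Pi.single j 1)
  have I : ∀ i j k l : Fin 3, Integrable (fun x => lineDeriv ℝ (ext' w i) x (Pi.single k 1) *
      lineDeriv ℝ (ext' w j) x (Pi.single l 1)) :=
    fun i j k l => ld_mul_integrable (hlip i) (hlip j) (hsup j) _ _
  set G : E3 → ℝ := fun x => ∑ i, ∑ j, (lineDeriv ℝ (ext' w i) x (Pi.single j 1)) ^ 2 with hG
  set S : E3 → ℝ := fun x => ∑ i, ∑ j, ((lineDeriv ℝ (ext' w i) x (Pi.single j 1) +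
    lineDeriv ℝ (ext' w j) x (Pi.single i 1)) / 2) ^ 2 with hS
  set Sw : E3 → ℝ := fun x => ∑ i : Fin 3, ∑ j : Fin 3,
              ((pd j (fun y => w y i) x + pd i (fun y => w y j) x) / 2) ^ 2 with hSw
  have IG : Integrable G :=
    integrable_finsetSum _ fun i _ => integrable_finsetSum _ fun j _ => by
      simpa only [sq] using I i i j j
  have IS : Integrable S := by
    refine integrable_finsetSum _ fun i _ => integrable_finsetSum _ fun j _ => ?_
    have := (((I i i j j).add ((I i j j i).const_mul 2)).add (I j j i i)).const_mul (1/4)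
    refine this.congr (Eventually.of_forall fun x => ?_)
    simp only [Pi.add_apply]
    ring
  have hlowG : ∫ x in lowerHalf, ∑ i : Fin 3, ∑ j : Fin 3, (pd j (fun y => w y i) x) ^ 2
      = ∫ x in lowerHalf, G x :=
    setIntegral_congr_fun lower_meas fun x hx => by simp only [hG, ext_lower hw _ _ hx]
  have hSL : Set.EqOn S Sw lowerHalf := fun x hx => by simp only [hS, hSw, ext_lower hw _ _ hx]
  have hlowS : ∫ x in lowerHalf, S x = ∫ x in lowerHalf, Sw x :=
    setIntegral_congr_fun lower_meas hSL
  have ISw : IntegrableOn Sw lowerHalf := (IS.integrableOn).congr_fun hSL lower_meas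
  obtain ⟨J1, c1⟩ := cov 1 one_pos ISw
  obtain ⟨J3, c3⟩ := cov 3 (by norm_num) ISw
  have hup : ∫ x in upperHalf, S x ≤ ∫ x in upperHalf, 200 * (Sw (TT 1 x) + Sw (TT 3 x)) := by
    refine setIntegral_mono_on IS.integrableOn ((J1.add J3).const_mul 200) upper_meas fun x hx => ?_
    simp only [hS, hSw, ext_upper hw _ _ hx, Finset.mul_sum, ← Finset.sum_add_distrib]
    refine Finset.sum_le_sum fun i _ => Finset.sum_le_sum fun j _ => ?_
    generalize pd j (fun y => w y i) (TT 1 x) = p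
    generalize pd i (fun y => w y j) (TT 1 x) = q
    generalize pd j (fun y => w y i) (TT 3 x) = r
    generalize pd i (fun y => w y j) (TT 3 x) = s
    unfold ca cb dg
    split_ifs <;>
      nlinarith [sq_nonneg (p + q + (r + s)), sq_nonneg (p + q - (r + s)), sq_nonneg (p + q),
        sq_nonneg (r + s)]
  have hup2 : ∫ x in upperHalf, 200 * (Sw (TT 1 x) + Sw (TT 3 x))
      = 200 * ((1:ℝ)⁻¹ * ∫ x in lowerHalf, Sw x) + 200 * ((3:ℝ)⁻¹ * ∫ x in lowerHalf, Sw x) := by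
    rw [integral_const_mul, integral_add J1 J3, c1, c3]; ring
  have hsplit : ∫ x, S x = (∫ x in lowerHalf, S x) + ∫ x in upperHalf, S x := by
    rw [← setIntegral_congr_set upper_ae, integral_add_compl lower_meas IS]
  have hle : ∫ x in lowerHalf, G x ≤ ∫ x, G x :=
    setIntegral_le_integral IG (Eventually.of_forall fun x => by positivity)
  have hnn : 0 ≤ ∫ x in lowerHalf, Sw x := integral_nonneg fun x => by positivity
  rw [hlowG]
  linarith
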